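/- Let q > 7 be an odd prime power, let H = {(x,y) ∈ F_{q²}² : x^{q+1} = y^q + y} be the set of affine F_{q²}-points of the Hermitian curve, and let C be the linear code over F_{q²} whose codewords are the evaluation vectors (F(P))_{P ∈ H} of the polynomials F ∈ F_{q²}[x,y] of total degree at most 2. Let F ∈ F_{q²}[x,y] have total degree 2 and be irreducible over the algebraic closure of F_{q²} (i.e., F defines an irreducible conic), and suppose that F vanishes at at least 5 points of H. Then the codeword ev(F) = (F(P))_{P ∈ H} is a minimal codeword of C: every G ∈ F_{q²}[x,y] of total degree at most 2 whose evaluation vector ev(G) has support contained in the support of ev(F) satisfies ev(G) = λ·ev(F) for some λ ∈ F_{q²}. -/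

import Mathlib

open MvPolynomial

/-!
Bézout's theorem for an irreducible conic `F` and a curve `G` of degree at most `n` says that more
than `2 * n` common points force `F ∣ G`. Induct on `n`. The line `L` through two common points `P`
and `Q` meets `F` in these two points only, each with multiplicity one, so `F` restricted to `L`
divides `G` restricted to `L`. Lifting the quotient to a polynomial `H` in the plane, `G - F * H`
vanishes on `L`, so it equals `L * M` with `M` of degree at most `n - 1`, and `M` vanishes at the
common points other than `P` and `Q`.

If the support of `ev G` is contained in that of `ev F`, the zeros of `F` are common points. Five of
them exceed the bound `2 * 2`, so `F ∣ G` and the quotient is a constant.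
-/

section Preliminaries

variable {R S K σ : Type*} [CommRing R] [CommRing S] [Field K]

theorem isLocalHom_mvPolynomial_map (f : R →+* S) [IsLocalHom f] (hf : Function.Injective f) :
    IsLocalHom (MvPolynomial.map f : MvPolynomial σ R →+* MvPolynomial σ S) where
  map_nonunit F hF := by
    obtain ⟨hconst, hnil⟩ := MvPolynomial.isUnit_iff.1 hF
    rw [coeff_map] at hconst
    refine MvPolynomial.isUnit_iff.2 ⟨isUnit_of_map_unit f _ hconst, fun m hm => ?_⟩
    rw [← IsNilpotent.map_iff hf, ← coeff_map]
    exact hnil m hm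

theorem totalDegree_C_mul_X_sub_C_le [Nontrivial R] (a c : R) (i : σ) :
    (C a * (X i - C c)).totalDegree ≤ 1 := by
  refine (totalDegree_mul _ _).trans ?_
  rw [totalDegree_C, zero_add]
  exact (totalDegree_sub_C_le _ _).trans_eq (totalDegree_X i)

theorem totalDegree_polynomial_aeval_le {R : Type*} [CommSemiring R] (T : MvPolynomial σ R)
    (h : Polynomial R) :
    (Polynomial.aeval T h).totalDegree ≤ h.natDegree * T.totalDegree := by
  rw [Polynomial.aeval_eq_sum_range]
  refine totalDegree_finsetSum_le fun i hi => ?_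
  calc (h.coeff i • T ^ i).totalDegree
      ≤ (T ^ i).totalDegree := totalDegree_smul_le _ _
    _ ≤ i * T.totalDegree := totalDegree_pow _ _
    _ ≤ h.natDegree * T.totalDegree :=
        Nat.mul_le_mul_right _ (Nat.lt_succ_iff.1 (Finset.mem_range.1 hi))

theorem exists_eq_C_mul_of_dvd_of_totalDegree_le [IsDomain R] {F G : MvPolynomial σ R}
    (hdvd : F ∣ G) (hdeg : G.totalDegree ≤ F.totalDegree) : ∃ l : R, G = C l * F := by
  obtain ⟨M, rfl⟩ := hdvd
  by_cases hFM : F * M = 0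
  · exact ⟨0, by rw [hFM, map_zero, zero_mul]⟩
  rw [totalDegree_mul_of_isDomain (left_ne_zero_of_mul hFM) (right_ne_zero_of_mul hFM)] at hdeg
  have hconst : M = C (M.coeff 0) := totalDegree_eq_zero_iff_eq_C.1 (by lia)
  exact ⟨M.coeff 0, by rw [← hconst, mul_comm]⟩

theorem polynomial_dvd_of_natDegree_le_card {f g : Polynomial K} (hf : f ≠ 0) (s : Finset K)
    (hdeg : f.natDegree ≤ s.card) (hfs : ∀ t ∈ s, f.eval t = 0) (hgs : ∀ t ∈ s, g.eval t = 0) :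
    f ∣ g := by
  have hprod_dvd : ∀ h : Polynomial K, (∀ t ∈ s, h.eval t = 0) →
      ∏ t ∈ s, (Polynomial.X - Polynomial.C t) ∣ h := fun h hs =>
    Finset.prod_dvd_of_coprime
      (fun _ _ _ _ hne => Polynomial.pairwise_coprime_X_sub_C Function.injective_id hne)
      fun t ht => Polynomial.dvd_iff_isRoot.2 (hs t ht)
  have hf_eq := Polynomial.eq_leadingCoeff_mul_of_monic_of_dvd_of_natDegree_le
    (Polynomial.monic_prod_X_sub_C id s) (hprod_dvd f hfs) (by simpa using hdeg)
  rw [hf_eq, Polynomial.C_mul_dvd (Polynomial.leadingCoeff_ne_zero.2 hf)]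
  exact hprod_dvd g hgs

end Preliminaries

section RestrictToLine

variable {R σ : Type*} [CommRing R]

/-- The restriction of a polynomial to the line through `P` and `Q`, as a univariate polynomial in
the parameter `t` of the point `P + t (Q - P)`. -/
noncomputable def restrictToLine (P Q : σ → R) : MvPolynomial σ R →ₐ[R] Polynomial R :=
  aeval fun i => Polynomial.C (P i) + Polynomial.C (Q i - P i) * Polynomial.X

theorem eval_restrictToLine (P Q : σ → R) (F : MvPolynomial σ R) (t : R) :
    (restrictToLine P Q F).eval t = eval (AffineMap.lineMap P Q t) F := by
  have hhom : (Polynomial.aeval t).comp (restrictToLine P Q) =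
      aeval (AffineMap.lineMap P Q t : σ → R) := by
    ext i
    simp only [restrictToLine, AlgHom.coe_comp, Function.comp_apply, aeval_X,
      Polynomial.coe_aeval_eq_eval, Polynomial.eval_add, Polynomial.eval_mul, Polynomial.eval_C,
      Polynomial.eval_X, AffineMap.lineMap_apply, vsub_eq_sub, vadd_eq_add, Pi.add_apply,
      Pi.smul_apply, Pi.sub_apply, smul_eq_mul]
    ring
  simpa [Polynomial.coe_aeval_eq_eval, coe_aeval_eq_eval] using DFunLike.congr_fun hhom F

theorem natDegree_restrictToLine_le (P Q : σ → R) (F : MvPolynomial σ R) :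
    (restrictToLine P Q F).natDegree ≤ F.totalDegree := by
  refine (aeval_natDegree_le F le_rfl _ fun i => ?_).trans_eq (mul_one _)
  rw [add_comm]
  exact Polynomial.natDegree_linear_le

theorem dvd_sub_aeval_restrictToLine (P Q : σ → R) {L T : MvPolynomial σ R}
    (hT : ∀ i, L ∣ X i - (C (P i) + C (Q i - P i) * T)) (F : MvPolynomial σ R) :
    L ∣ F - Polynomial.aeval T (restrictToLine P Q F) := by
  let mod := Ideal.Quotient.mkₐ R (Ideal.span {L})
  have hhom : mod = (mod.comp (Polynomial.aeval T)).comp (restrictToLine P Q) := by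
    ext i
    have hi := Ideal.Quotient.eq.2 (Ideal.mem_span_singleton.2 (hT i))
    simpa [mod, restrictToLine, algebraMap_eq] using hi
  exact Ideal.mem_span_singleton.1 (Ideal.Quotient.eq.1 (DFunLike.congr_fun hhom F))

end RestrictToLine

section LineEquation

variable {R : Type*} [CommRing R]

/-- The linear polynomial that defines the line through `P` and `Q`; it is the zero polynomial if
`P = Q`. -/
noncomputable def lineEquation (P Q : Fin 2 → R) : MvPolynomial (Fin 2) R :=
  C (Q 1 - P 1) * (X 0 - C (P 0)) - C (Q 0 - P 0) * (X 1 - C (P 1))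

theorem eval_lineEquation (P Q A : Fin 2 → R) :
    eval A (lineEquation P Q) = (Q 1 - P 1) * (A 0 - P 0) - (Q 0 - P 0) * (A 1 - P 1) := by
  simp [lineEquation]

theorem eval_left_lineEquation (P Q : Fin 2 → R) : eval P (lineEquation P Q) = 0 := by
  simp [eval_lineEquation]

theorem eval_right_lineEquation (P Q : Fin 2 → R) : eval Q (lineEquation P Q) = 0 := by
  rw [eval_lineEquation]
  ring

theorem lineEquation_ne_zero {P Q : Fin 2 → R} (hPQ : P ≠ Q) : lineEquation P Q ≠ 0 := by
  intro h
  have heval : ∀ A : Fin 2 → R, (Q 1 - P 1) * (A 0 - P 0) - (Q 0 - P 0) * (A 1 - P 1) = 0 :=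
    fun A => by rw [← eval_lineEquation, h, map_zero]
  have hsnd := heval ![P 0 + 1, P 1]
  have hfst := heval ![P 0, P 1 + 1]
  simp only [Matrix.cons_val_zero, Matrix.cons_val_one] at hfst hsnd
  refine hPQ (funext (Fin.forall_fin_two.2 ⟨?_, ?_⟩))
  · linear_combination hfst
  · linear_combination -hsnd

theorem totalDegree_lineEquation [Nontrivial R] {P Q : Fin 2 → R} (hPQ : P ≠ Q) :
    (lineEquation P Q).totalDegree = 1 := by
  refine le_antisymm ((totalDegree_sub _ _).trans (max_le
    (totalDegree_C_mul_X_sub_C_le _ _ _) (totalDegree_C_mul_X_sub_C_le _ _ _))) ?_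
  by_contra! hlt
  have hconst := totalDegree_eq_zero_iff_eq_C.1 (Nat.lt_one_iff.1 hlt)
  have hvanish := eval_left_lineEquation P Q
  rw [hconst, eval_C] at hvanish
  exact lineEquation_ne_zero hPQ (by rw [hconst, hvanish, map_zero])

theorem not_isUnit_lineEquation [Nontrivial R] (P Q : Fin 2 → R) :
    ¬IsUnit (lineEquation P Q) := fun h =>
  not_isUnit_zero (eval_left_lineEquation P Q ▸ h.map (eval P))

end LineEquation

section PlaneCurve

variable {K : Type*} [Field K] {P Q : Fin 2 → K} {F G : MvPolynomial (Fin 2) K}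

-- `T` recovers the parameter `t` of the point `P + t (Q - P)` of the line.
theorem exists_lineParameter (hPQ : P ≠ Q) :
    ∃ T : MvPolynomial (Fin 2) K, T.totalDegree ≤ 1 ∧ restrictToLine P Q T = Polynomial.X ∧
      ∀ i, lineEquation P Q ∣ X i - (C (P i) + C (Q i - P i) * T) := by
  obtain ⟨a, b, hab⟩ : ∃ a b : K, a * (Q 0 - P 0) + b * (Q 1 - P 1) = 1 := by
    by_cases h0 : Q 0 = P 0
    · have h1 : Q 1 - P 1 ≠ 0 := fun h1 =>
        hPQ (funext (Fin.forall_fin_two.2 ⟨h0.symm, (sub_eq_zero.1 h1).symm⟩))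
      exact ⟨0, (Q 1 - P 1)⁻¹, by simp [h1]⟩
    · exact ⟨(Q 0 - P 0)⁻¹, 0, by simp [sub_ne_zero.2 h0]⟩
  refine ⟨C a * (X 0 - C (P 0)) + C b * (X 1 - C (P 1)),
    (totalDegree_add _ _).trans (max_le
      (totalDegree_C_mul_X_sub_C_le _ _ _) (totalDegree_C_mul_X_sub_C_le _ _ _)), ?_,
    Fin.forall_fin_two.2 ⟨⟨C b, ?_⟩, ⟨-C a, ?_⟩⟩⟩
  · have hab' := congrArg (Polynomial.C (R := K)) hab
    simp only [map_add, map_mul, map_sub, map_one] at hab'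
    simp only [restrictToLine, map_add, map_mul, map_sub, aeval_X, algHom_C,
      Polynomial.algebraMap_eq]
    linear_combination Polynomial.X * hab'
  all_goals
    have hab' := congrArg (C (σ := Fin 2)) hab
    simp only [map_add, map_mul, map_sub, map_one] at hab'
    simp only [lineEquation, map_sub]
  · linear_combination -(X 0 - C (P 0)) * hab'
  · linear_combination -(X 1 - C (P 1)) * hab'

theorem exists_lineMap_eq_of_eval_lineEquation_eq_zero (hPQ : P ≠ Q) {A : Fin 2 → K}
    (hA : eval A (lineEquation P Q) = 0) : ∃ t : K, AffineMap.lineMap P Q t = A := by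
  obtain ⟨T, -, -, hT⟩ := exists_lineParameter hPQ
  refine ⟨eval A T, funext fun i => ?_⟩
  have hi := map_dvd (eval A) (hT i)
  rw [hA, zero_dvd_iff] at hi
  simp only [map_sub, map_add, map_mul, eval_X, eval_C] at hi
  simp only [AffineMap.lineMap_apply, vsub_eq_sub, vadd_eq_add, Pi.add_apply, Pi.smul_apply,
    Pi.sub_apply, smul_eq_mul]
  linear_combination -hi

theorem lineEquation_dvd_of_restrictToLine_eq_zero (hPQ : P ≠ Q)
    (hF : restrictToLine P Q F = 0) : lineEquation P Q ∣ F := by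
  obtain ⟨T, -, -, hT⟩ := exists_lineParameter hPQ
  simpa [hF] using dvd_sub_aeval_restrictToLine P Q hT F

theorem card_collinear_zeros_le_totalDegree (hPQ : P ≠ Q) (hne : restrictToLine P Q F ≠ 0)
    (s : Finset (Fin 2 → K)) (hline : ∀ A ∈ s, eval A (lineEquation P Q) = 0)
    (hzero : ∀ A ∈ s, eval A F = 0) : s.card ≤ F.totalDegree := by
  classical
  have hsub : s ⊆ (restrictToLine P Q F).roots.toFinset.image (AffineMap.lineMap P Q) := by
    intro A hA
    obtain ⟨t, rfl⟩ := exists_lineMap_eq_of_eval_lineEquation_eq_zero hPQ (hline A hA)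
    refine Finset.mem_image_of_mem _ (Multiset.mem_toFinset.2 ((Polynomial.mem_roots hne).2 ?_))
    rw [Polynomial.IsRoot, eval_restrictToLine, hzero _ hA]
  calc s.card ≤ (restrictToLine P Q F).roots.toFinset.card :=
        (Finset.card_le_card hsub).trans Finset.card_image_le
    _ ≤ (restrictToLine P Q F).roots.card := Multiset.toFinset_card_le _
    _ ≤ (restrictToLine P Q F).natDegree := Polynomial.card_roots' _
    _ ≤ F.totalDegree := natDegree_restrictToLine_le P Q F

theorem exists_lineEquation_dvd_sub_mul (hPQ : P ≠ Q)
    (hdeg : (restrictToLine P Q F).natDegree = F.totalDegree)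
    (hdvd : restrictToLine P Q F ∣ restrictToLine P Q G) :
    ∃ H, (F * H).totalDegree ≤ G.totalDegree ∧ lineEquation P Q ∣ G - F * H := by
  by_cases hG : restrictToLine P Q G = 0
  · exact ⟨0, by simp, by simpa using lineEquation_dvd_of_restrictToLine_eq_zero hPQ hG⟩
  obtain ⟨T, hTdeg, hTX, -⟩ := exists_lineParameter hPQ
  obtain ⟨h, hh⟩ := hdvd
  rw [hh] at hG
  refine ⟨Polynomial.aeval T h, ?_, lineEquation_dvd_of_restrictToLine_eq_zero hPQ ?_⟩
  · calc (F * Polynomial.aeval T h).totalDegree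
        ≤ F.totalDegree + (Polynomial.aeval T h).totalDegree := totalDegree_mul _ _
      _ ≤ F.totalDegree + h.natDegree * 1 := by
          gcongr
          exact (totalDegree_polynomial_aeval_le T h).trans (Nat.mul_le_mul_left _ hTdeg)
      _ = (restrictToLine P Q G).natDegree := by
          rw [mul_one, ← hdeg, hh, Polynomial.natDegree_mul (left_ne_zero_of_mul hG)
            (right_ne_zero_of_mul hG)]
      _ ≤ G.totalDegree := natDegree_restrictToLine_le P Q G
  · rw [map_sub, map_mul, ← Polynomial.aeval_algHom_apply, hTX, Polynomial.aeval_X_left_apply, hh,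
      sub_self]

theorem restrictToLine_ne_zero_of_irreducible (hF : Irreducible F) (hdeg : 1 < F.totalDegree)
    (hPQ : P ≠ Q) : restrictToLine P Q F ≠ 0 := by
  intro hzero
  obtain ⟨M, rfl⟩ := lineEquation_dvd_of_restrictToLine_eq_zero hPQ hzero
  have hM : M.totalDegree = 0 := (isUnit_iff_totalDegree_of_isReduced.1
    ((hF.isUnit_or_isUnit rfl).resolve_left (not_isUnit_lineEquation P Q))).2
  have hle := totalDegree_mul (lineEquation P Q) M
  rw [hM, totalDegree_lineEquation hPQ] at hle
  exact hdeg.not_ge hle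

theorem eval_lineEquation_ne_zero_of_conic (hF : Irreducible F) (hdeg : F.totalDegree = 2)
    (hPQ : P ≠ Q) (hP : eval P F = 0) (hQ : eval Q F = 0) {A : Fin 2 → K} (hAP : A ≠ P)
    (hAQ : A ≠ Q) (hA : eval A F = 0) : eval A (lineEquation P Q) ≠ 0 := by
  classical
  intro hline
  have hcard := card_collinear_zeros_le_totalDegree hPQ
    (restrictToLine_ne_zero_of_irreducible hF (by lia) hPQ) {A, P, Q}
    (by simp [hline, eval_left_lineEquation, eval_right_lineEquation]) (by simp [hP, hQ, hA])
  rw [hdeg, Finset.card_eq_three.2 ⟨A, P, Q, hAP, hAQ, hPQ, rfl⟩] at hcard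
  lia

theorem exists_lineEquation_dvd_sub_mul_of_conic (hF : Irreducible F) (hdeg : F.totalDegree = 2)
    (hPQ : P ≠ Q) (hPF : eval P F = 0) (hQF : eval Q F = 0) (hPG : eval P G = 0)
    (hQG : eval Q G = 0) :
    ∃ H, (F * H).totalDegree ≤ G.totalDegree ∧ lineEquation P Q ∣ G - F * H := by
  classical
  have hne := restrictToLine_ne_zero_of_irreducible hF (by lia) hPQ
  have hle : (restrictToLine P Q F).natDegree ≤ 2 :=
    (natDegree_restrictToLine_le P Q F).trans_eq hdeg
  have hcard : ({0, 1} : Finset K).card = 2 := Finset.card_pair zero_ne_one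
  have hroots : ∀ E : MvPolynomial (Fin 2) K, eval P E = 0 → eval Q E = 0 →
      ∀ t ∈ ({0, 1} : Finset K), (restrictToLine P Q E).eval t = 0 := fun E hP hQ t ht => by
    rw [eval_restrictToLine]
    rcases Finset.mem_insert.1 ht with rfl | ht
    · rwa [AffineMap.lineMap_apply_zero]
    · rwa [Finset.mem_singleton.1 ht, AffineMap.lineMap_apply_one]
  have hge : 2 ≤ (restrictToLine P Q F).natDegree := hcard.symm.trans_le <|
    Polynomial.card_le_degree_of_subset_roots fun t ht =>
      (Polynomial.mem_roots hne).2 (hroots F hPF hQF t ht)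
  exact exists_lineEquation_dvd_sub_mul hPQ (by lia)
    (polynomial_dvd_of_natDegree_le_card hne {0, 1} (by lia) (hroots F hPF hQF)
      (hroots G hPG hQG))

theorem conic_dvd_of_two_mul_lt_card (hF : Irreducible F) (hdeg : F.totalDegree = 2) {n : ℕ}
    (hG : G.totalDegree ≤ n) (s : Finset (Fin 2 → K)) (hs : 2 * n < s.card)
    (hFs : ∀ A ∈ s, eval A F = 0) (hGs : ∀ A ∈ s, eval A G = 0) : F ∣ G := by
  classical
  induction n generalizing G s with
  | zero =>
    obtain ⟨A, hA⟩ := Finset.card_pos.1 hs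
    have hconst := totalDegree_eq_zero_iff_eq_C.1 (Nat.le_zero.1 hG)
    have hvanish := hGs A hA
    rw [hconst, eval_C] at hvanish
    rw [hconst, hvanish, map_zero]
    exact dvd_zero F
  | succ n ih =>
    obtain ⟨P, hP, Q, hQ, hPQ⟩ := Finset.one_lt_card.1 (show 1 < s.card by lia)
    obtain ⟨H, hH, M, hM⟩ := exists_lineEquation_dvd_sub_mul_of_conic hF hdeg hPQ (hFs P hP)
      (hFs Q hQ) (hGs P hP) (hGs Q hQ)
    rw [← dvd_sub_left (dvd_mul_right F H), hM]
    refine dvd_mul_of_dvd_right ?_ _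
    rcases eq_or_ne M 0 with rfl | hM0
    · exact dvd_zero F
    have hMdeg : M.totalDegree ≤ n := by
      have hle := (totalDegree_sub G (F * H)).trans (max_le hG (hH.trans hG))
      rw [hM, totalDegree_mul_of_isDomain (lineEquation_ne_zero hPQ) hM0,
        totalDegree_lineEquation hPQ] at hle
      lia
    refine ih hMdeg ((s.erase P).erase Q) ?_ (fun A hA => ?_) (fun A hA => ?_)
    · rw [Finset.card_erase_of_mem (Finset.mem_erase.2 ⟨hPQ.symm, hQ⟩), Finset.card_erase_of_mem hP]
      lia
    all_goals
      simp only [Finset.mem_erase] at hA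
      obtain ⟨hAQ, hAP, hAs⟩ := hA
    · exact hFs A hAs
    · have hprod : eval A (lineEquation P Q) * eval A M = 0 := by
        rw [← map_mul, ← hM, map_sub, map_mul, hFs A hAs, hGs A hAs, zero_mul, sub_zero]
      exact (mul_eq_zero.1 hprod).resolve_left (eval_lineEquation_ne_zero_of_conic hF hdeg hPQ
        (hFs P hP) (hFs Q hQ) hAP hAQ (hFs A hAs))

end PlaneCurve

theorem stmt_14_general {K : Type*} [Field K] (S : Set (K × K)) {F : MvPolynomial (Fin 2) K}
    (hdeg : F.totalDegree = 2) (hirr : Irreducible F)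
    (hpts : 5 ≤ {P ∈ S | eval ![P.1, P.2] F = 0}.encard) {G : MvPolynomial (Fin 2) K}
    (hG : G.totalDegree ≤ 2)
    (hsupp : ∀ P ∈ S, eval ![P.1, P.2] G ≠ 0 → eval ![P.1, P.2] F ≠ 0) :
    ∃ l : K, G = C l * F := by
  obtain ⟨Z, hZ, hZcard⟩ := Set.exists_subset_encard_eq hpts
  have hZfin : Z.Finite := Set.finite_of_encard_eq_coe hZcard
  lift Z to Finset (K × K) using hZfin
  rw [Set.encard_coe_eq_coe_finsetCard] at hZcard
  have hdvd : F ∣ G := by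
    refine conic_dvd_of_two_mul_lt_card hirr hdeg hG (Z.map (finTwoArrowEquiv K).symm.toEmbedding)
      ?_ ?_ ?_
    · rw [Finset.card_map]
      norm_cast at hZcard
      lia
    · exact Finset.forall_mem_map.2 fun P hP => (hZ hP).2
    · exact Finset.forall_mem_map.2 fun P hP =>
        not_not.1 fun hne => hsupp P (hZ hP).1 hne (hZ hP).2
  exact exists_eq_C_mul_of_dvd_of_totalDegree_le hdvd (hG.trans_eq hdeg.symm)

/-- Let `q > 7` be odd and let `F` define an irreducible conic (degree-2 polynomial,
irreducible over the algebraic closure) meeting the Hermitian curve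
`x^{q+1} = y^q + y` over `F_{q²}` in at least `5` points. Then the evaluation of `F`
at the affine points of the Hermitian curve is a minimal codeword of the code of
evaluations of polynomials of total degree at most `2`. -/
theorem stmt_14 (p e q : ℕ) (hp : p.Prime) (he : 0 < e) (hq : q = p ^ e)
    (hodd : Odd q) (hq7 : 7 < q)
    (K : Type) [Field K] [Fintype K] (hK : Fintype.card K = q ^ 2)
    (F : MvPolynomial (Fin 2) K) (hdeg : F.totalDegree = 2)
    (hirr : Irreducible (MvPolynomial.map (algebraMap K (AlgebraicClosure K)) F))
    (hpts : 5 ≤ Nat.card {P : K × K // P.1 ^ (q + 1) = P.2 ^ q + P.2 ∧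
        MvPolynomial.eval ![P.1, P.2] F = 0}) :
    ∀ G : MvPolynomial (Fin 2) K, G.totalDegree ≤ 2 →
      (∀ x y : K, x ^ (q + 1) = y ^ q + y →
        MvPolynomial.eval ![x, y] G ≠ 0 → MvPolynomial.eval ![x, y] F ≠ 0) →
      ∃ l : K, ∀ x y : K, x ^ (q + 1) = y ^ q + y →
        MvPolynomial.eval ![x, y] G = l * MvPolynomial.eval ![x, y] F := by
  intro G hG hsupp
  have := isLocalHom_mvPolynomial_map (σ := Fin 2) (algebraMap K (AlgebraicClosure K))
    (algebraMap K (AlgebraicClosure K)).injective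
  have hpts' : 5 ≤ {P ∈ {P : K × K | P.1 ^ (q + 1) = P.2 ^ q + P.2} |
      eval ![P.1, P.2] F = 0}.encard :=
    (Nat.cast_le.2 hpts).trans (Set.ncard_le_encard _)
  obtain ⟨l, rfl⟩ := stmt_14_general _ hdeg (.of_map hirr) hpts' hG fun P => hsupp P.1 P.2
  exact ⟨l, fun x y _ => by rw [map_mul, eval_C]⟩
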